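/- arXiv:2006.03069 — 4 statements merged into one kernel-verified Lean document; each statement's English description precedes it below -/
import Mathlib

section
/- Let 𝒜 : ℂ^{nd×d} → ℝ^m be a linear map with Hilbert–Schmidt adjoint 𝒜†, let X, X^l ∈ Ω̂^{n,d}_{s,r}, set G = 𝒜†(𝒜(X − X^l)), and let X^{l+1} be a minimizer over Z ∈ Ω̂^{n,d}_{s,r} of ‖Z − (X^l + G)‖_F. Let 𝒫 be any orthogonal projection (with respect to the Hilbert–Schmidt inner product) on ℂ^{nd×d} that fixes X, X^l, and X^{l+1}, i.e., 𝒫(X) = X, 𝒫(X^l) = X^l, 𝒫(X^{l+1}) = X^{l+1}. Then ‖X^{l+1} − X‖_F ≤ 2 ‖𝒫 ∘ (Id − 𝒜† ∘ 𝒜) ∘ 𝒫‖_∞ · ‖X^l − X‖_F, where ‖·‖_∞ denotes the operator norm. -/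
open scoped BigOperators ComplexOrder Matrix

/-- Frobenius norm of a complex matrix. -/
noncomputable def frob {α β : Type*} [Fintype α] [Fintype β]
    (X : Matrix α β ℂ) : ℝ := Real.sqrt (∑ i, ∑ j, ‖X i j‖ ^ 2)

/-- `ξ` has at most `s` non-vanishing entries. -/
def SparseVec {α : Type*} (s : ℕ) (ξ : α → ℝ) : Prop :=
  {i | ξ i ≠ 0}.ncard ≤ s

/-- Rank-`r` quantum states: positive semidefinite, unit trace, rank at most `r`. -/
def DensityR (d r : ℕ) (x : Matrix (Fin d) (Fin d) ℂ) : Prop :=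
  x.PosSemidef ∧ x.trace = 1 ∧ x.rank ≤ r

/-- The sparse de-mixing signal set `Ω̂^{n,d}_{s,r}`. -/
def OmegaHat (n d s r : ℕ) : Set (Matrix (Fin n × Fin d) (Fin d) ℂ) :=
  { X | ∃ ξ : Fin n → ℝ, ∃ x : Fin n → Matrix (Fin d) (Fin d) ℂ,
      SparseVec s ξ ∧ (∀ i, DensityR d r (x i)) ∧
      ∀ i j l, X (i, j) l = (ξ i : ℂ) * x i j l }

/-!
Write `v = X^{l+1} - X` and `e = (X - X^l) - 𝒜†𝒜(X - X^l)`. Comparing `X^{l+1}` with the competitor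
`X` gives `‖v + e‖ ≤ ‖e‖`, hence `‖v‖² ≤ -2⟪v, e⟫`. Since `𝒫` is symmetric and fixes `v`, the error
`e` may be replaced by `𝒫 e`, and Cauchy–Schwarz yields `‖v‖ ≤ 2‖𝒫 e‖`. Finally
`𝒫 e = 𝒫 (Id - 𝒜†𝒜) 𝒫 (X - X^l)`.
-/

section InnerProductSpace

open scoped RealInnerProductSpace

variable {E : Type*} [SeminormedAddCommGroup E] [InnerProductSpace ℝ E]

lemma norm_sq_le_neg_two_mul_inner_of_norm_add_le {v e : E} (h : ‖v + e‖ ≤ ‖e‖) :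
    ‖v‖ ^ 2 ≤ -2 * ⟪v, e⟫ := by
  have h_sq : ‖v + e‖ ^ 2 ≤ ‖e‖ ^ 2 := by gcongr
  rw [norm_add_sq_real] at h_sq
  linarith

lemma norm_le_two_mul_norm_map_of_norm_add_le {P : E →ₗ[ℝ] E}
    (hP : P.IsSymmetric) {v e : E} (hv : P v = v) (h : ‖v + e‖ ≤ ‖e‖) :
    ‖v‖ ≤ 2 * ‖P e‖ := by
  have h_mul : ‖v‖ * ‖v‖ ≤ ‖v‖ * (2 * ‖P e‖) := calc
    ‖v‖ * ‖v‖ = ‖v‖ ^ 2 := (sq _).symm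
    _ ≤ -2 * ⟪v, e⟫ := norm_sq_le_neg_two_mul_inner_of_norm_add_le h
    _ = 2 * -⟪v, P e⟫ := by rw [← hP v e, hv]; ring
    _ ≤ 2 * (‖v‖ * ‖P e‖) := by
      gcongr
      exact (neg_le_abs _).trans (abs_real_inner_le_norm v (P e))
    _ = ‖v‖ * (2 * ‖P e‖) := by ring
  obtain hv_zero | hv_pos := (norm_nonneg v).eq_or_lt
  · rw [← hv_zero]; positivity
  · exact le_of_mul_le_mul_left h_mul hv_pos

theorem IHT_one_step_contraction_general {T : E → E} {P : E →ₗ[ℝ] E} (hP : P.IsSymmetric)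
    {x xl xl1 : E} (hPx : P x = x) (hPxl : P xl = xl) (hPxl1 : P xl1 = xl1)
    (hle : ‖xl1 - (xl + T (x - xl))‖ ≤ ‖x - (xl + T (x - xl))‖)
    {C : ℝ} (hC : ∀ y, ‖P (P y - T (P y))‖ ≤ C * ‖y‖) :
    ‖xl1 - x‖ ≤ 2 * C * ‖xl - x‖ := by
  have hP_step : P (xl1 - x) = xl1 - x := by rw [map_sub, hPxl1, hPx]
  have hP_diff : P (x - xl) = x - xl := by rw [map_sub, hPx, hPxl]
  have h_error : ‖(xl1 - x) + ((x - xl) - T (x - xl))‖ ≤ ‖(x - xl) - T (x - xl)‖ := by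
    rwa [sub_add_eq_sub_sub, sub_add_eq_sub_sub, ← sub_add_sub_cancel xl1 x xl, add_sub_assoc]
      at hle
  calc
    ‖xl1 - x‖ ≤ 2 * ‖P ((x - xl) - T (x - xl))‖ :=
      norm_le_two_mul_norm_map_of_norm_add_le hP hP_step h_error
    _ = 2 * ‖P (P (x - xl) - T (P (x - xl)))‖ := by rw [hP_diff]
    _ ≤ 2 * (C * ‖x - xl‖) := by gcongr; exact hC _
    _ = 2 * C * ‖xl - x‖ := by rw [norm_sub_rev, mul_assoc]

end InnerProductSpace

section HilbertSchmidt

open scoped Matrix.Norms.Frobenius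

variable {α β 𝕜 : Type*} [Fintype α] [Fintype β] [RCLike 𝕜]

lemma frobenius_norm_sq_eq_re_trace (Y : Matrix α β 𝕜) :
    ‖Y‖ ^ 2 = RCLike.re (Yᴴ * Y).trace := by
  rw [Matrix.frobenius_norm_def, ← Real.sqrt_eq_rpow, Real.sq_sqrt (by positivity),
    Finset.sum_comm]
  simp [Matrix.trace, Matrix.mul_apply, RCLike.norm_sq_eq_def]

lemma re_trace_conjTranspose_mul_comm (Y Z : Matrix α β 𝕜) :
    RCLike.re (Yᴴ * Z).trace = RCLike.re (Zᴴ * Y).trace := by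
  rw [← RCLike.conj_re, ← RCLike.star_def, ← Matrix.trace_conjTranspose,
    Matrix.conjTranspose_mul, Matrix.conjTranspose_conjTranspose]

/-- The Hilbert–Schmidt inner product `Re tr(Yᴴ Z)`, whose norm is the Frobenius norm. The scalars
are taken to be real because the operators to which it is applied are only real-linear. -/
noncomputable abbrev hilbertSchmidtInnerProductSpace :
    InnerProductSpace ℝ (Matrix α β 𝕜) where
  toNormedSpace := Matrix.frobeniusNormedSpace
  inner Y Z := RCLike.re (Yᴴ * Z).trace
  norm_sq_eq_re_inner := frobenius_norm_sq_eq_re_trace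
  conj_inner_symm Y Z := re_trace_conjTranspose_mul_comm Z Y
  add_left Y Y' Z := by
    rw [Matrix.conjTranspose_add, Matrix.add_mul, Matrix.trace_add, map_add]
  smul_left Y Z r := by simp [RCLike.smul_re]

lemma frob_eq_frobenius_norm (Y : Matrix α β ℂ) : frob Y = ‖Y‖ := by
  rw [frob, Matrix.frobenius_norm_def, Real.sqrt_eq_rpow]
  simp

end HilbertSchmidt

/-- **One-step contraction estimate of the IHT iteration.**
Let `G = 𝒜†𝒜(X − X^l)` and let `X^{l+1}` be a best approximation in
`Ω̂^{n,d}_{s,r}` to `X^l + G`. For any orthogonal projection `𝒫` (w.r.t. the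
Hilbert–Schmidt inner product) fixing `X`, `X^l` and `X^{l+1}`,
`‖X^{l+1} − X‖_F ≤ 2 ‖𝒫 ∘ (Id − 𝒜†𝒜) ∘ 𝒫‖_∞ ‖X^l − X‖_F`.
The operator norm is encoded faithfully by quantifying over all upper bounds
`C` for the operator `𝒫 ∘ (Id − 𝒜†𝒜) ∘ 𝒫` (w.r.t. the Frobenius norm):
the stated inequality holds with the operator norm iff it holds for all such
`C`. -/
theorem IHT_one_step_contraction
    (n d s r m : ℕ)
    (A : Matrix (Fin n × Fin d) (Fin d) ℂ →ₗ[ℝ] (Fin m → ℝ))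
    (Aadj : (Fin m → ℝ) →ₗ[ℝ] Matrix (Fin n × Fin d) (Fin d) ℂ)
    -- `Aadj` is the adjoint of `A` w.r.t. the Hilbert–Schmidt inner product
    (hadj : ∀ (Y : Matrix (Fin n × Fin d) (Fin d) ℂ) (v : Fin m → ℝ),
      (∑ k, A Y k * v k) = (Matrix.trace ((Aadj v)ᴴ * Y)).re)
    (X Xl : Matrix (Fin n × Fin d) (Fin d) ℂ)
    (hX : X ∈ OmegaHat n d s r) (hXl : Xl ∈ OmegaHat n d s r)
    (G : Matrix (Fin n × Fin d) (Fin d) ℂ)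
    (hG : G = Aadj (A (X - Xl)))
    -- `X^{l+1}` minimizes `‖Z − (X^l + G)‖_F` over `Z ∈ Ω̂^{n,d}_{s,r}`
    (Xl1 : Matrix (Fin n × Fin d) (Fin d) ℂ)
    (hXl1mem : Xl1 ∈ OmegaHat n d s r)
    (hmin : ∀ Z ∈ OmegaHat n d s r,
      frob (Xl1 - (Xl + G)) ≤ frob (Z - (Xl + G)))
    -- `P` is an orthogonal projection w.r.t. the Hilbert–Schmidt inner product
    (P : Matrix (Fin n × Fin d) (Fin d) ℂ →ₗ[ℝ] Matrix (Fin n × Fin d) (Fin d) ℂ)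
    (hidem : ∀ Y, P (P Y) = P Y)
    (hsa : ∀ Y Z : Matrix (Fin n × Fin d) (Fin d) ℂ,
      (Matrix.trace ((P Y)ᴴ * Z)).re = (Matrix.trace (Yᴴ * P Z)).re)
    -- `P` fixes `X`, `X^l` and `X^{l+1}`
    (hPX : P X = X) (hPXl : P Xl = Xl) (hPXl1 : P Xl1 = Xl1)
    -- `C` is any bound on the operator norm of `𝒫 ∘ (Id − 𝒜†𝒜) ∘ 𝒫`
    (C : ℝ)
    (hC : ∀ Y : Matrix (Fin n × Fin d) (Fin d) ℂ,
      frob (P (P Y - Aadj (A (P Y)))) ≤ C * frob Y) :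
    frob (Xl1 - X) ≤ 2 * C * frob (Xl - X) := by
  subst hG
  simp only [frob_eq_frobenius_norm] at hmin hC ⊢
  open scoped Matrix.Norms.Frobenius in
  let := hilbertSchmidtInnerProductSpace (α := Fin n × Fin d) (β := Fin d) (𝕜 := ℂ)
  exact IHT_one_step_contraction_general (T := fun Y => Aadj (A Y)) hsa hPX hPXl hPXl1
    (hmin X hX) hC
end

section
/- Let X ∈ ℂ^{d×d} be Hermitian with eigenvalue decomposition X = U diag(λ) U†, where the eigenvalues λ_1 ≥ λ_2 ≥ … ≥ λ_d are ordered decreasingly. Define Y* = U diag(μ) U† where μ_i = max(λ_i, 0) for i ≤ r and μ_i = 0 for i > r. Then Y* minimizes ‖X − Y‖_F over all positive semidefinite matrices Y ∈ ℂ^{d×d} of rank at most r. -/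
open scoped BigOperators ComplexOrder Matrix

/-
By Birkhoff's theorem, the Hoffman–Wielandt inequality pairs the eigenvalues `lam` of `X` with those
of `Y`, listed as `f` in a suitable order, so that `∑ i, (lam i - f i) ^ 2 ≤ ‖X - Y‖ ^ 2`. Where
`f i = 0` the summand is `lam i ^ 2`; elsewhere `0 ≤ f i` saves at most `(max (lam i) 0) ^ 2`. There
are at most `r` such places, so the total saving is largest when they carry the `r` largest
eigenvalues, which is the saving that `Y*` achieves exactly.
-/

section Sums

open Finset

variable {ι R : Type*} [LinearOrder R]

lemma sum_le_sum_of_card_le_of_forall_notMem_le [AddCommMonoid R] [IsOrderedCancelAddMonoid R]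
    {s t : Finset ι} {a : ι → R} (hcard : #t ≤ #s) (ha : ∀ i ∈ s, 0 ≤ a i)
    (hst : ∀ i ∈ s, ∀ j ∉ s, a j ≤ a i) :
    ∑ i ∈ t, a i ≤ ∑ i ∈ s, a i := by
  classical
  rw [← sum_sdiff_le_sum_sdiff]
  have hcard' : #(t \ s) ≤ #(s \ t) := card_sdiff_le_card_sdiff_iff.2 hcard
  obtain hempty | hnonempty := (s \ t).eq_empty_or_nonempty
  · rw [hempty, card_empty, Nat.le_zero, card_eq_zero] at hcard'
    rw [hcard', hempty]
  · obtain ⟨k, hk, hmin⟩ := exists_min_image (s \ t) a hnonempty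
    have hks : k ∈ s := (mem_sdiff.1 hk).1
    calc
      ∑ i ∈ t \ s, a i ≤ #(t \ s) • a k :=
        sum_le_card_nsmul _ _ _ fun j hj => hst k hks j (mem_sdiff.1 hj).2
      _ ≤ #(s \ t) • a k := nsmul_le_nsmul_left (ha k hks) hcard'
      _ ≤ ∑ i ∈ s \ t, a i := card_nsmul_le_sum _ _ _ hmin

variable [CommRing R]

lemma sum_sq_sub_ite_max_zero [Fintype ι] [DecidableEq ι] (s : Finset ι) (lam : ι → R) :
    ∑ i, (lam i - if i ∈ s then max (lam i) 0 else 0) ^ 2 =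
      ∑ i, lam i ^ 2 - ∑ i ∈ s, max (lam i) 0 ^ 2 := by
  rw [← Fintype.sum_ite_mem s, ← sum_sub_distrib]
  refine sum_congr rfl fun i _ => ?_
  split_ifs
  · rcases le_total (lam i) 0 with h | h <;> simp [h]
  · ring

variable [IsStrictOrderedRing R]

lemma sq_sub_max_zero_sq_le_sq_sub (x : R) {y : R} (hy : 0 ≤ y) :
    x ^ 2 - max x 0 ^ 2 ≤ (x - y) ^ 2 := by
  rcases le_total x 0 with hx | hx
  · rw [max_eq_right hx]; nlinarith
  · rw [max_eq_left hx]; nlinarith [sq_nonneg (x - y)]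

lemma sum_sq_sub_ite_max_zero_le [Fintype ι] [DecidableEq ι] {s : Finset ι} {lam f : ι → R}
    (hs : ∀ i ∈ s, ∀ j ∉ s, lam j ≤ lam i) (hf : ∀ i, 0 ≤ f i) (hcard : #{i | f i ≠ 0} ≤ #s) :
    ∑ i, (lam i - if i ∈ s then max (lam i) 0 else 0) ^ 2 ≤ ∑ i, (lam i - f i) ^ 2 := by
  have saving_le : ∑ i with f i ≠ 0, max (lam i) 0 ^ 2 ≤ ∑ i ∈ s, max (lam i) 0 ^ 2 :=
    sum_le_sum_of_card_le_of_forall_notMem_le hcard (fun _ _ => sq_nonneg _) fun i hi j hj => by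
      have := hs i hi j hj
      gcongr
  calc
    ∑ i, (lam i - if i ∈ s then max (lam i) 0 else 0) ^ 2
      = ∑ i, lam i ^ 2 - ∑ i ∈ s, max (lam i) 0 ^ 2 := sum_sq_sub_ite_max_zero s lam
    _ ≤ ∑ i, lam i ^ 2 - ∑ i with f i ≠ 0, max (lam i) 0 ^ 2 := sub_le_sub_left saving_le _
    _ = ∑ i, (lam i ^ 2 - if f i ≠ 0 then max (lam i) 0 ^ 2 else 0) := by
      rw [sum_filter, sum_sub_distrib]
    _ ≤ ∑ i, (lam i - f i) ^ 2 := sum_le_sum fun i _ => by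
      split_ifs with hi
      · exact sq_sub_max_zero_sq_le_sq_sub (lam i) (hf i)
      · rw [not_not.1 hi, sub_zero, sub_zero]

end Sums

lemma exists_perm_sum_le_of_mem_doublyStochastic {n R : Type*} [Fintype n] [DecidableEq n]
    [Field R] [LinearOrder R] [IsStrictOrderedRing R] {M : Matrix n n R}
    (hM : M ∈ doublyStochastic R n) (c : n → n → R) :
    ∃ σ : Equiv.Perm n, ∑ i, c i (σ i) ≤ ∑ i, ∑ j, M i j * c i j := by
  let cost : Matrix n n R →ₗ[R] R := ∑ i, ∑ j, c i j • Matrix.entryLinearMap R R i j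
  have cost_apply (A : Matrix n n R) : cost A = ∑ i, ∑ j, A i j * c i j := by
    simp [cost, mul_comm]
  have hM' : M ∈ convexHull R {A | ∃ σ : Equiv.Perm n, σ.permMatrix R = A} := by
    rwa [← doublyStochastic_eq_convexHull_permMatrix]
  obtain ⟨_, ⟨σ, rfl⟩, hσ⟩ :=
    (cost.concaveOn convex_univ).exists_le_of_mem_convexHull (Set.subset_univ _) hM'
  refine ⟨σ, ?_⟩
  simpa [cost_apply, PEquiv.toMatrix_apply, Equiv.toPEquiv_apply] using hσ

section FrobeniusNorm

open Finset Matrix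
open scoped Matrix.Norms.Frobenius

lemma frob_eq_norm {α β : Type*} [Fintype α] [Fintype β] (A : Matrix α β ℂ) : frob A = ‖A‖ := by
  simp [frob, frobenius_norm_def, Real.sqrt_eq_rpow]

variable {𝕜 m n : Type*} [Fintype m] [Fintype n]

lemma frobenius_norm_sq {α : Type*} [SeminormedAddCommGroup α] (A : Matrix m n α) :
    ‖A‖ ^ 2 = ∑ i, ∑ j, ‖A i j‖ ^ 2 := by
  simp only [frobenius_norm_def, ← Real.sqrt_eq_rpow, Real.rpow_ofNat]
  exact Real.sq_sqrt (by positivity)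

variable [RCLike 𝕜]

lemma trace_conjTranspose_mul_self_eq_frobenius_norm_sq (A : Matrix m n 𝕜) :
    (Aᴴ * A).trace = ((‖A‖ ^ 2 : ℝ) : 𝕜) := by
  rw [frobenius_norm_sq, sum_comm]
  simp [trace, Matrix.mul_apply, RCLike.conj_mul]

lemma conjTranspose_mem_unitaryGroup [DecidableEq n] {U : Matrix n n 𝕜}
    (hU : U ∈ unitaryGroup n 𝕜) : Uᴴ ∈ unitaryGroup n 𝕜 :=
  Unitary.star_mem hU

lemma frobenius_norm_unitary_mul [DecidableEq m] {U : Matrix m m 𝕜}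
    (hU : U ∈ unitaryGroup m 𝕜) (A : Matrix m n 𝕜) : ‖U * A‖ = ‖A‖ := by
  have gram_eq : (U * A)ᴴ * (U * A) = Aᴴ * A := by
    rw [conjTranspose_mul, Matrix.mul_assoc, ← Matrix.mul_assoc Uᴴ,
      ← star_eq_conjTranspose, Unitary.star_mul_self_of_mem hU, Matrix.one_mul]
  have sq_eq : ((‖U * A‖ ^ 2 : ℝ) : 𝕜) = ((‖A‖ ^ 2 : ℝ) : 𝕜) := by
    simp only [← trace_conjTranspose_mul_self_eq_frobenius_norm_sq, gram_eq]
  exact (sq_eq_sq₀ (norm_nonneg _) (norm_nonneg _)).1 (RCLike.ofReal_injective sq_eq)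

lemma frobenius_norm_mul_unitary [DecidableEq n] {U : Matrix n n 𝕜}
    (hU : U ∈ unitaryGroup n 𝕜) (A : Matrix m n 𝕜) : ‖A * U‖ = ‖A‖ := by
  rw [← frobenius_norm_conjTranspose, conjTranspose_mul,
    frobenius_norm_unitary_mul (conjTranspose_mem_unitaryGroup hU), frobenius_norm_conjTranspose]

variable [DecidableEq n]

lemma frobenius_norm_unitary_conj_diagonal_sq {U : Matrix n n 𝕜} (hU : U ∈ unitaryGroup n 𝕜)
    (a : n → 𝕜) : ‖U * diagonal a * Uᴴ‖ ^ 2 = ∑ i, ‖a i‖ ^ 2 := by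
  rw [frobenius_norm_mul_unitary (conjTranspose_mem_unitaryGroup hU), frobenius_norm_unitary_mul hU,
    frobenius_norm_diagonal, EuclideanSpace.norm_sq_eq]

lemma sum_norm_sq_row_of_mem_unitaryGroup {U : Matrix n n 𝕜} (hU : U ∈ unitaryGroup n 𝕜)
    (i : n) : ∑ j, ‖U i j‖ ^ 2 = 1 := by
  have diag_eq : (U * Uᴴ) i i = 1 := by
    rw [← star_eq_conjTranspose, Unitary.mul_star_self_of_mem hU, one_apply_eq]
  simp only [Matrix.mul_apply, conjTranspose_apply, RCLike.star_def, RCLike.mul_conj]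
    at diag_eq
  exact_mod_cast diag_eq

lemma map_norm_sq_mem_doublyStochastic {U : Matrix n n 𝕜} (hU : U ∈ unitaryGroup n 𝕜) :
    U.map (‖·‖ ^ 2) ∈ doublyStochastic ℝ n := by
  refine mem_doublyStochastic_iff_sum.2
    ⟨fun i j => sq_nonneg _, sum_norm_sq_row_of_mem_unitaryGroup hU, fun j => ?_⟩
  simpa using sum_norm_sq_row_of_mem_unitaryGroup (conjTranspose_mem_unitaryGroup hU) j

lemma frobenius_norm_sub_unitary_conj_diagonal_sq {U V : Matrix n n 𝕜}
    (hU : U ∈ unitaryGroup n 𝕜) (hV : V ∈ unitaryGroup n 𝕜) (a b : n → 𝕜) :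
    ‖U * diagonal a * Uᴴ - V * diagonal b * Vᴴ‖ ^ 2 =
      ∑ i, ∑ j, ‖(Uᴴ * V) i j‖ ^ 2 * ‖a i - b j‖ ^ 2 := by
  have factor : U * diagonal a * Uᴴ - V * diagonal b * Vᴴ =
      U * (diagonal a * (Uᴴ * V) - Uᴴ * V * diagonal b) * Vᴴ := by
    have hU' : U * Uᴴ = 1 := Unitary.mul_star_self_of_mem hU
    have hV' : V * Vᴴ = 1 := Unitary.mul_star_self_of_mem hV
    simp only [Matrix.mul_sub, Matrix.sub_mul, ← Matrix.mul_assoc, hU', Matrix.one_mul]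
    simp only [Matrix.mul_assoc, hV', Matrix.mul_one]
  rw [factor, frobenius_norm_mul_unitary (conjTranspose_mem_unitaryGroup hV),
    frobenius_norm_unitary_mul hU, frobenius_norm_sq]
  refine sum_congr rfl fun i _ => sum_congr rfl fun j _ => ?_
  rw [Matrix.sub_apply, diagonal_mul, mul_diagonal, mul_comm (a i), ← _root_.mul_sub,
    norm_mul, mul_pow]

/-- The **Hoffman–Wielandt inequality**. -/
theorem exists_perm_sum_norm_sub_sq_le_frobenius_norm_sq {U V : Matrix n n 𝕜}
    (hU : U ∈ unitaryGroup n 𝕜) (hV : V ∈ unitaryGroup n 𝕜) (a b : n → 𝕜) :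
    ∃ σ : Equiv.Perm n, ∑ i, ‖a i - b (σ i)‖ ^ 2 ≤
      ‖U * diagonal a * Uᴴ - V * diagonal b * Vᴴ‖ ^ 2 := by
  rw [frobenius_norm_sub_unitary_conj_diagonal_sq hU hV]
  have overlap_mem : (Uᴴ * V).map (‖·‖ ^ 2) ∈ doublyStochastic ℝ n :=
    map_norm_sq_mem_doublyStochastic (mul_mem (conjTranspose_mem_unitaryGroup hU) hV)
  exact exists_perm_sum_le_of_mem_doublyStochastic overlap_mem fun i j => ‖a i - b j‖ ^ 2

lemma exists_perm_sum_sub_eigenvalues_sq_le {U Y : Matrix n n 𝕜}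
    (hU : U ∈ unitaryGroup n 𝕜) (lam : n → ℝ) (hY : Y.IsHermitian) :
    ∃ σ : Equiv.Perm n, ∑ i, (lam i - hY.eigenvalues (σ i)) ^ 2 ≤
      ‖U * diagonal (fun i => (lam i : 𝕜)) * Uᴴ - Y‖ ^ 2 := by
  obtain ⟨σ, hσ⟩ := exists_perm_sum_norm_sub_sq_le_frobenius_norm_sq hU hY.eigenvectorUnitary.2
    (fun i => (lam i : 𝕜)) (RCLike.ofReal ∘ hY.eigenvalues)
  have hY_eq : (hY.eigenvectorUnitary : Matrix n n 𝕜) * diagonal (RCLike.ofReal ∘ hY.eigenvalues) *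
      (hY.eigenvectorUnitary : Matrix n n 𝕜)ᴴ = Y := hY.spectral_theorem.symm
  refine ⟨σ, ?_⟩
  simpa only [hY_eq, Function.comp_apply, ← RCLike.ofReal_sub, RCLike.norm_ofReal, sq_abs] using hσ

theorem psd_low_rank_projection_general {U Y : Matrix n n 𝕜} (hU : U ∈ unitaryGroup n 𝕜)
    {lam : n → ℝ} {s : Finset n} (hs : ∀ i ∈ s, ∀ j ∉ s, lam j ≤ lam i)
    (hY : Y.PosSemidef) (hrank : Y.rank ≤ #s) :
    ‖U * diagonal (fun i => (lam i : 𝕜)) * Uᴴ -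
        U * diagonal (fun i => ((if i ∈ s then max (lam i) 0 else 0 : ℝ) : 𝕜)) * Uᴴ‖ ≤
      ‖U * diagonal (fun i => (lam i : 𝕜)) * Uᴴ - Y‖ := by
  obtain ⟨σ, hσ⟩ := exists_perm_sum_sub_eigenvalues_sq_le hU lam hY.isHermitian
  have card_support_le : #{i | hY.isHermitian.eigenvalues (σ i) ≠ 0} ≤ #s := by
    rwa [card_equiv σ (t := {k | hY.isHermitian.eigenvalues k ≠ 0}) (by simp),
      ← Fintype.card_subtype, ← hY.isHermitian.rank_eq_card_non_zero_eigs]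
  refine (sq_le_sq₀ (norm_nonneg _) (norm_nonneg _)).1 (le_trans ?_ hσ)
  rw [← Matrix.sub_mul, ← Matrix.mul_sub, diagonal_sub,
    frobenius_norm_unitary_conj_diagonal_sq hU]
  simp only [← RCLike.ofReal_sub, RCLike.norm_ofReal, sq_abs]
  exact sum_sq_sub_ite_max_zero_le hs (fun i => hY.eigenvalues_nonneg (σ i)) card_support_le

end FrobeniusNorm

/-- **Correctness of eigenvalue hard thresholding.**
Let `X = U diag(λ) Uᴴ` be Hermitian with decreasingly ordered eigenvalues and
unitary `U`. Then `Y* = U diag(μ) Uᴴ` with `μ i = max(λ i, 0)` for the first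
`r` indices and `μ i = 0` otherwise minimizes `‖X − Y‖_F` over all positive
semidefinite `Y ∈ ℂ^{d×d}` of rank at most `r`. -/
theorem psd_low_rank_projection
    (d r : ℕ) (X U : Matrix (Fin d) (Fin d) ℂ) (lam : Fin d → ℝ)
    (hU : U ∈ Matrix.unitaryGroup (Fin d) ℂ)
    (hdec : ∀ i j : Fin d, i ≤ j → lam j ≤ lam i)
    (hX : X = U * Matrix.diagonal (fun i => (lam i : ℂ)) * Uᴴ)
    (Ystar : Matrix (Fin d) (Fin d) ℂ)
    (hYstar : Ystar = U * Matrix.diagonal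
        (fun i : Fin d => ((if i.1 < r then max (lam i) 0 else 0 : ℝ) : ℂ)) * Uᴴ) :
    ∀ Y : Matrix (Fin d) (Fin d) ℂ, Y.PosSemidef → Y.rank ≤ r →
      frob (X - Ystar) ≤ frob (X - Y) := by
  intro Y hY hr
  have hrank : Y.rank ≤ Finset.card {i : Fin d | i.1 < r} := by
    simp [Fin.card_filter_val_lt, Y.rank_le_width, hr]
  simpa [frob_eq_norm, hX, hYstar] using
    psd_low_rank_projection_general hU (fun i hi j hj => hdec i j (by grind)) hY hrank
end

section
/- Let A ∈ ℝ^{d×n}. Then the infimum over v ∈ ℝ^d and s-sparse w ∈ Σ^n_s of ‖A − v wᵀ‖_F² equals ‖A‖_F² − max{ ‖A w‖_{ℓ2}² : w ∈ Σ^n_s, ‖w‖_{ℓ2} = 1 }. -/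
open scoped BigOperators Matrix

/-- Frobenius norm of a real matrix. -/
noncomputable def frobR {α β : Type*} [Fintype α] [Fintype β]
    (X : Matrix α β ℝ) : ℝ := Real.sqrt (∑ i, ∑ j, (X i j) ^ 2)

/-- ℓ₂-norm of a real vector. -/
noncomputable def l2 {α : Type*} [Fintype α] (y : α → ℝ) : ℝ :=
  Real.sqrt (∑ k, (y k) ^ 2)

/-! For a unit vector `w`, the matrices `v wᵀ` form a subspace onto which `A` projects
orthogonally as `(A w) wᵀ`, so Pythagoras gives
`‖A − v wᵀ‖_F² = ‖A‖_F² − ‖A w‖² + ‖v − A w‖²`. The optimal `v` is `A w`, and minimising the error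
amounts to maximising `‖A w‖²`. Scaling `w` to a unit vector and absorbing its norm into `v` handles
every nonzero `w`. -/

section Norms

variable {α β : Type*} [Fintype α] [Fintype β]

lemma l2_eq_norm_toLp (x : α → ℝ) : l2 x = ‖WithLp.toLp 2 x‖ := by
  simp [l2, EuclideanSpace.norm_eq]

lemma l2_pos {x : α → ℝ} (hx : x ≠ 0) : 0 < l2 x := by
  simpa [l2_eq_norm_toLp] using hx

lemma l2_smul (c : ℝ) (x : α → ℝ) : l2 (c • x) = |c| * l2 x := by
  simp [l2_eq_norm_toLp, norm_smul]

lemma l2_inv_smul_self {x : α → ℝ} (hx : x ≠ 0) : l2 ((l2 x)⁻¹ • x) = 1 := by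
  rw [l2_smul, abs_of_pos (inv_pos.2 (l2_pos hx)), inv_mul_cancel₀ (l2_pos hx).ne']

lemma l2_sq (x : α → ℝ) : l2 x ^ 2 = x ⬝ᵥ x := by
  rw [l2, Real.sq_sqrt (Finset.sum_nonneg fun _ _ => sq_nonneg _)]
  simp only [dotProduct, sq]

lemma l2_sub_sq (x y : α → ℝ) : l2 (x - y) ^ 2 = l2 x ^ 2 - 2 * (x ⬝ᵥ y) + l2 y ^ 2 := by
  simp only [l2_sq, sub_dotProduct, dotProduct_sub, dotProduct_comm y x]
  ring

lemma frobR_sq (X : Matrix α β ℝ) : frobR X ^ 2 = ∑ i, l2 (X.row i) ^ 2 := by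
  refine (Real.sq_sqrt (Finset.sum_nonneg fun _ _ =>
    Finset.sum_nonneg fun _ _ => sq_nonneg _)).trans ?_
  simp only [l2_sq, dotProduct, Matrix.row_apply, ← sq]

end Norms

section RankOneApproximation

variable {α β : Type*} [Fintype α] [Fintype β] (A : Matrix α β ℝ)

lemma l2_mulVec_sq_le (w : β → ℝ) : l2 (A *ᵥ w) ^ 2 ≤ frobR A ^ 2 * l2 w ^ 2 := by
  rw [frobR_sq, l2_sq (A *ᵥ w), dotProduct, Finset.sum_mul]
  refine Finset.sum_le_sum fun i _ => ?_
  simp only [l2_sq, dotProduct, ← sq]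
  exact Finset.sum_mul_sq_le_sq_mul_sq Finset.univ (A.row i) w

lemma frobR_sub_vecMulVec_sq (v : α → ℝ) (w : β → ℝ) :
    frobR (A - Matrix.vecMulVec v w) ^ 2 =
      frobR A ^ 2 - 2 * (v ⬝ᵥ A *ᵥ w) + l2 v ^ 2 * l2 w ^ 2 := by
  have row (i : α) : l2 ((A - Matrix.vecMulVec v w).row i) ^ 2 =
      l2 (A.row i) ^ 2 - 2 * (v i * (A *ᵥ w) i) + v i * v i * l2 w ^ 2 := by
    have row_eq : (A - Matrix.vecMulVec v w).row i = A.row i - v i • w := rfl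
    rw [row_eq, l2_sub_sq, dotProduct_smul, l2_smul, mul_pow, sq_abs, sq (v i)]
    rfl
  rw [frobR_sq, frobR_sq, l2_sq v, dotProduct, dotProduct, Finset.mul_sum, Finset.sum_mul,
    ← Finset.sum_sub_distrib, ← Finset.sum_add_distrib]
  exact Finset.sum_congr rfl fun i _ => row i

lemma frobR_sub_vecMulVec_sq_of_l2_eq_one (v : α → ℝ) {w : β → ℝ} (hw : l2 w = 1) :
    frobR (A - Matrix.vecMulVec v w) ^ 2 =
      frobR A ^ 2 - l2 (A *ᵥ w) ^ 2 + l2 (v - A *ᵥ w) ^ 2 := by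
  rw [frobR_sub_vecMulVec_sq, l2_sub_sq, hw]
  ring

lemma frobR_sq_sub_l2_mulVec_normalize_sq_le (v : α → ℝ) {w : β → ℝ} (hw : w ≠ 0) :
    frobR A ^ 2 - l2 (A *ᵥ ((l2 w)⁻¹ • w)) ^ 2 ≤ frobR (A - Matrix.vecMulVec v w) ^ 2 := by
  have normalize : Matrix.vecMulVec v w = Matrix.vecMulVec (l2 w • v) ((l2 w)⁻¹ • w) := by
    rw [Matrix.smul_vecMulVec, Matrix.vecMulVec_smul, smul_inv_smul₀ (l2_pos hw).ne']
  rw [normalize, frobR_sub_vecMulVec_sq_of_l2_eq_one A _ (l2_inv_smul_self hw)]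
  exact le_add_of_nonneg_right (sq_nonneg _)

theorem rank_one_sparse_approximation_identity_general {C : Set (β → ℝ)} (hne : C.Nonempty)
    (hC : ∀ c : ℝ, 0 < c → ∀ w ∈ C, c • w ∈ C) :
    sInf {t : ℝ | ∃ v : α → ℝ, ∃ w : β → ℝ, w ∈ C ∧
        t = frobR (A - Matrix.vecMulVec v w) ^ 2} =
      frobR A ^ 2 -
        sSup {t : ℝ | ∃ w : β → ℝ, w ∈ C ∧ l2 w = 1 ∧ t = l2 (A *ᵥ w) ^ 2} := by
  set errors := {t : ℝ | ∃ v : α → ℝ, ∃ w : β → ℝ, w ∈ C ∧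
    t = frobR (A - Matrix.vecMulVec v w) ^ 2}
  set gains := {t : ℝ | ∃ w : β → ℝ, w ∈ C ∧ l2 w = 1 ∧ t = l2 (A *ᵥ w) ^ 2}
  have errors_bddBelow : BddBelow errors := ⟨0, by rintro _ ⟨v, w, -, rfl⟩; positivity⟩
  have gains_bddAbove : BddAbove gains := by
    refine ⟨frobR A ^ 2, ?_⟩
    rintro _ ⟨w, -, hw, rfl⟩
    simpa [hw] using l2_mulVec_sq_le A w
  obtain ⟨w₀, hw₀⟩ := hne
  have frobR_mem : frobR A ^ 2 ∈ errors := ⟨0, w₀, hw₀, by simp⟩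
  apply le_antisymm
  · suffices sSup gains ≤ frobR A ^ 2 - sInf errors by linarith
    -- `gains` is empty when `C = {0}`; the convention `sSup ∅ = 0` is then the right value.
    refine Real.sSup_le ?_ (sub_nonneg.2 (csInf_le errors_bddBelow frobR_mem))
    rintro _ ⟨w, hwC, hw, rfl⟩
    refine le_sub_comm.1 (csInf_le errors_bddBelow ⟨A *ᵥ w, w, hwC, ?_⟩)
    simp [frobR_sub_vecMulVec_sq_of_l2_eq_one A _ hw, l2_sq]
  · refine le_csInf ⟨_, frobR_mem⟩ ?_
    rintro _ ⟨v, w, hwC, rfl⟩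
    rcases eq_or_ne w 0 with rfl | hw
    · have : 0 ≤ sSup gains := Real.sSup_nonneg (by rintro _ ⟨w, -, -, rfl⟩; positivity)
      simpa [frobR_sub_vecMulVec_sq, l2_sq] using this
    · have gain_le : l2 (A *ᵥ ((l2 w)⁻¹ • w)) ^ 2 ≤ sSup gains :=
        le_csSup gains_bddAbove
          ⟨_, hC _ (inv_pos.2 (l2_pos hw)) w hwC, l2_inv_smul_self hw, rfl⟩
      exact (sub_le_sub_left gain_le _).trans (frobR_sq_sub_l2_mulVec_normalize_sq_le A v hw)

end RankOneApproximation

lemma sparseVec_zero {α : Type*} (s : ℕ) : SparseVec s (0 : α → ℝ) := by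
  simp [SparseVec]

lemma SparseVec.smul {α : Type*} {s : ℕ} {ξ : α → ℝ} (hξ : SparseVec s ξ) (c : ℝ) :
    SparseVec s (c • ξ) := by
  rcases eq_or_ne c 0 with rfl | hc
  · simpa only [zero_smul] using sparseVec_zero s
  · simpa [SparseVec, hc] using hξ

/-- **Variational identity for rank-one approximation with one sparse factor.**
For `A ∈ ℝ^{d×n}`,
`inf { ‖A − v wᵀ‖_F² : v ∈ ℝ^d, w ∈ Σ^n_s }
  = ‖A‖_F² − max { ‖A w‖_{ℓ₂}² : w ∈ Σ^n_s, ‖w‖_{ℓ₂} = 1 }`. -/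
theorem rank_one_sparse_approximation_identity
    (d n s : ℕ) (A : Matrix (Fin d) (Fin n) ℝ) :
    sInf {t : ℝ | ∃ v : Fin d → ℝ, ∃ w : Fin n → ℝ, SparseVec s w ∧
        t = frobR (A - Matrix.vecMulVec v w) ^ 2} =
      frobR A ^ 2 -
        sSup {t : ℝ | ∃ w : Fin n → ℝ, SparseVec s w ∧ l2 w = 1 ∧
          t = l2 (A.mulVec w) ^ 2} := by
  exact rank_one_sparse_approximation_identity_general A (C := {w | SparseVec s w})
    ⟨0, sparseVec_zero s⟩ fun c _ _ hw => hw.smul c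
end

section
/- Let A' ∈ ℝ^{n×d} with rows A'_1, …, A'_n, and let A = Σ_{i=1}^n e_i ⊗ diag(A'_i) ∈ ℝ^{nd×d} be the block matrix whose i-th d×d block is the diagonal matrix with the i-th row of A' on its diagonal. Then the minimum over ξ ∈ Σ^n_s and Hermitian ρ ∈ ℂ^{d×d} of rank at most r of ‖A − ξ ⊗ ρ‖_F² equals the minimum over ξ ∈ Σ^n_s and λ ∈ Σ^d_r of ‖A' − ξ λᵀ‖_F². -/
open scoped BigOperators ComplexOrder Matrix

/-- The block matrix `A = ∑ᵢ eᵢ ⊗ diag(A'ᵢ) ∈ ℂ^{nd×d}` whose `i`-th `d×d`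
block is the diagonal matrix with the `i`-th row of `A'` on its diagonal. -/
def diagBlocks {n d : ℕ} (A' : Matrix (Fin n) (Fin d) ℝ) :
    Matrix (Fin n × Fin d) (Fin d) ℂ :=
  Matrix.of fun p l => if p.2 = l then (A' p.1 p.2 : ℂ) else 0

/-- The block matrix `ξ ⊗ ρ ∈ ℂ^{nd×d}` whose `i`-th `d×d` block is `ξ i • ρ`. -/
def tensorBlock {n d : ℕ} (ξ : Fin n → ℝ) (ρ : Matrix (Fin d) (Fin d) ℂ) :
    Matrix (Fin n × Fin d) (Fin d) ℂ :=
  Matrix.of fun p l => (ξ p.1 : ℂ) * ρ p.2 l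

/-!
Fix `ξ` and split `A' = R + ξ cᵀ` with `ξᵀ R = 0`. By Pythagoras the two objectives are
`‖R‖² + ‖ξ‖² ‖diag c - ρ‖²` and `‖R‖² + ‖ξ‖² ‖diag c - diag λ‖²`, so it remains to see that a
diagonal matrix has a best approximation of rank at most `r` that is itself diagonal. If `P` is the
orthogonal projection onto the range of `ρ`, then `‖diag c - ρ‖² ≥ ∑ⱼ cⱼ² (1 - ‖P eⱼ‖²)`. The
weights `‖P eⱼ‖²` lie in `[0, 1]` and add up to the rank of `ρ`, so `∑ⱼ cⱼ² ‖P eⱼ‖²` is at most the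
sum of the `r` largest `cⱼ²`.
-/

section LargestEntries

variable {ι : Type*} [Fintype ι]

lemma exists_card_eq_forall_notMem_le {α : Type*} [LinearOrder α] (c : ι → α) {r : ℕ}
    (hr : r ≤ Fintype.card ι) :
    ∃ S : Finset ι, S.card = r ∧ ∀ i ∈ S, ∀ j ∉ S, c j ≤ c i := by
  classical
  induction r with
  | zero => exact ⟨∅, by simp⟩
  | succ r ih =>
    obtain ⟨S, hS, hle⟩ := ih (by lia)
    have hne : Sᶜ.Nonempty := by
      rw [← Finset.card_pos, Finset.card_compl]
      lia
    obtain ⟨m, hm, hmax⟩ := Finset.exists_max_image Sᶜ c hne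
    rw [Finset.mem_compl] at hm
    refine ⟨insert m S, by rw [Finset.card_insert_of_notMem hm, hS], fun i hi j hj ↦ ?_⟩
    rw [Finset.mem_insert, not_or] at hj
    rcases Finset.mem_insert.1 hi with rfl | hi
    · exact hmax j (Finset.mem_compl.2 hj.2)
    · exact hle i hi j hj.2

lemma sum_mul_le_sum_of_threshold {c p : ι → ℝ} {t : ℝ} {S : Finset ι} (ht : 0 ≤ t)
    (hS : ∀ j ∈ S, t ≤ c j) (hSc : ∀ j ∉ S, c j ≤ t) (hp₀ : ∀ j, 0 ≤ p j) (hp₁ : ∀ j, p j ≤ 1)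
    (hp : ∑ j, p j ≤ S.card) :
    ∑ j, p j * c j ≤ ∑ j ∈ S, c j := by
  classical
  -- `t` is the Lagrange multiplier of the constraint `∑ j, p j ≤ S.card`.
  have hterm (j : ι) : p j * c j - (if j ∈ S then c j else 0) ≤
      t * (p j - if j ∈ S then 1 else 0) := by
    split_ifs with hj
    · nlinarith [hS j hj, hp₁ j]
    · nlinarith [hSc j hj, hp₀ j]
  have hsum := Finset.sum_le_sum fun j (_ : j ∈ Finset.univ) ↦ hterm j
  simp only [Finset.sum_sub_distrib, ← Finset.mul_sum, Finset.sum_ite_mem, Finset.univ_inter,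
    Finset.sum_const, nsmul_eq_mul, mul_one] at hsum
  nlinarith

lemma exists_card_le_sum_mul_le_sum {c p : ι → ℝ} {r : ℕ} (hc : ∀ j, 0 ≤ c j)
    (hp₀ : ∀ j, 0 ≤ p j) (hp₁ : ∀ j, p j ≤ 1) (hp : ∑ j, p j ≤ r) :
    ∃ S : Finset ι, S.card ≤ r ∧ ∑ j, p j * c j ≤ ∑ j ∈ S, c j := by
  classical
  rcases le_or_gt (Fintype.card ι) r with hr | hr
  · exact ⟨Finset.univ, hr, Finset.sum_le_sum fun j _ ↦ mul_le_of_le_one_left (hc j) (hp₁ j)⟩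
  · obtain ⟨S, hS, hle⟩ := exists_card_eq_forall_notMem_le c hr.le
    have hne : Sᶜ.Nonempty := by
      rw [← Finset.card_pos, Finset.card_compl]
      lia
    obtain ⟨m, hm, hmax⟩ := Finset.exists_max_image Sᶜ c hne
    exact ⟨S, hS.le, sum_mul_le_sum_of_threshold (hc m)
      (fun i hi ↦ hle i hi m (Finset.mem_compl.1 hm))
      (fun j hj ↦ hmax j (Finset.mem_compl.2 hj)) hp₀ hp₁ (hS ▸ hp)⟩

end LargestEntries

section InnerProductSpace

variable {𝕜 E ι : Type*} [RCLike 𝕜] [NormedAddCommGroup E] [InnerProductSpace 𝕜 E]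

lemma norm_sq_sub_norm_starProjection_sq_le (V : Submodule 𝕜 E) [V.HasOrthogonalProjection]
    (x : E) {v : E} (hv : v ∈ V) :
    ‖x‖ ^ 2 - ‖V.starProjection x‖ ^ 2 ≤ ‖x - v‖ ^ 2 := by
  have hproj : Vᗮ.starProjection (x - v) = Vᗮ.starProjection x := by
    rw [map_sub, Vᗮ.starProjection_apply_eq_zero_iff.2 (V.le_orthogonal_orthogonal hv), sub_zero]
  rw [V.norm_sq_eq_add_norm_sq_starProjection x, V.norm_sq_eq_add_norm_sq_starProjection (x - v),
    hproj]
  linarith [sq_nonneg ‖V.starProjection (x - v)‖]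

variable [Fintype ι]

lemma sum_norm_starProjection_sq_eq_finrank (b : OrthonormalBasis ι 𝕜 E) (V : Submodule 𝕜 E)
    [V.HasOrthogonalProjection] :
    ∑ j, ‖V.starProjection (b j)‖ ^ 2 = Module.finrank 𝕜 V := by
  have : FiniteDimensional 𝕜 E := b.toBasis.finiteDimensional_of_finite
  have hproj : LinearMap.IsProj V V.starProjection.toLinearMap :=
    ⟨V.starProjection_apply_mem, fun x hx ↦ V.starProjection_eq_self_iff.2 hx⟩
  have htrace : ∑ j, inner 𝕜 (b j) (V.starProjection (b j)) = Module.finrank 𝕜 V :=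
    (V.starProjection.toLinearMap.trace_eq_sum_inner b).symm.trans hproj.trace
  calc
    ∑ j, ‖V.starProjection (b j)‖ ^ 2 = ∑ j, RCLike.re (inner 𝕜 (b j) (V.starProjection (b j))) :=
      Finset.sum_congr rfl fun j _ ↦ by
        rw [inner_re_symm, V.re_inner_starProjection_eq_normSq, V.starProjection_apply,
          Submodule.coe_norm]
    _ = Module.finrank 𝕜 V := by rw [← map_sum, htrace, RCLike.natCast_re]

lemma exists_card_le_finrank_sum_compl_le [DecidableEq ι] (b : OrthonormalBasis ι 𝕜 E)
    (V : Submodule 𝕜 E) (c : ι → 𝕜) {v : ι → E} (hv : ∀ j, v j ∈ V) :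
    ∃ S : Finset ι, S.card ≤ Module.finrank 𝕜 V ∧
      ∑ j ∈ Sᶜ, ‖c j‖ ^ 2 ≤ ∑ j, ‖c j • b j - v j‖ ^ 2 := by
  have : FiniteDimensional 𝕜 E := b.toBasis.finiteDimensional_of_finite
  let p (j : ι) : ℝ := ‖V.starProjection (b j)‖ ^ 2
  have hp₁ (j : ι) : p j ≤ 1 :=
    pow_le_one₀ (norm_nonneg _) ((V.norm_starProjection_apply_le _).trans_eq (b.norm_eq_one j))
  obtain ⟨S, hS, hle⟩ := exists_card_le_sum_mul_le_sum (c := fun j ↦ ‖c j‖ ^ 2)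
    (fun j ↦ sq_nonneg _) (fun j ↦ sq_nonneg _) hp₁
    (sum_norm_starProjection_sq_eq_finrank b V).le
  refine ⟨S, hS, ?_⟩
  calc
    ∑ j ∈ Sᶜ, ‖c j‖ ^ 2 = ∑ j, ‖c j‖ ^ 2 - ∑ j ∈ S, ‖c j‖ ^ 2 :=
      eq_sub_of_add_eq (Finset.sum_compl_add_sum S _)
    _ ≤ ∑ j, ‖c j‖ ^ 2 - ∑ j, p j * ‖c j‖ ^ 2 := by gcongr
    _ = ∑ j, (‖c j • b j‖ ^ 2 - ‖V.starProjection (c j • b j)‖ ^ 2) := by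
      simp only [← Finset.sum_sub_distrib, map_smul, norm_smul, b.norm_eq_one, mul_pow, p]
      ring_nf
    _ ≤ ∑ j, ‖c j • b j - v j‖ ^ 2 :=
      Finset.sum_le_sum fun j _ ↦ norm_sq_sub_norm_starProjection_sq_le V _ (hv j)

lemma sum_norm_add_smul_sq {F : Type*} [NormedAddCommGroup F] [InnerProductSpace ℝ F]
    {x : ι → F} {ξ : ι → ℝ} (y : F) (h : ∑ i, ξ i • x i = 0) :
    ∑ i, ‖x i + ξ i • y‖ ^ 2 = ∑ i, ‖x i‖ ^ 2 + (ξ ⬝ᵥ ξ) * ‖y‖ ^ 2 := by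
  have hcross : ∑ i, 2 * inner ℝ (x i) (ξ i • y) = 0 := by
    rw [← Finset.mul_sum]
    simp only [real_inner_smul_right, ← real_inner_smul_left, ← sum_inner, h, inner_zero_left,
      mul_zero]
  simp only [norm_add_sq_real, Finset.sum_add_distrib, hcross, add_zero, norm_smul, mul_pow,
    Real.norm_eq_abs, sq_abs, ← Finset.sum_mul, dotProduct, sq (ξ _)]

end InnerProductSpace

section SparseVec

variable {α : Type*} {r : ℕ}

lemma sparseVec_indicator {S : Finset α} (hS : S.card ≤ r) (c : α → ℝ) :
    SparseVec r ((S : Set α).indicator c) :=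
  calc
    {i | (S : Set α).indicator c i ≠ 0}.ncard ≤ (S : Set α).ncard :=
      Set.ncard_le_ncard (fun _ ↦ Set.mem_of_indicator_ne_zero) S.finite_toSet
    _ = S.card := Set.ncard_coe_finset S
    _ ≤ r := hS

lemma rank_diagonal_ofReal_le_iff_sparseVec [Fintype α] [DecidableEq α] {l : α → ℝ} :
    (Matrix.diagonal fun j ↦ (l j : ℂ)).rank ≤ r ↔ SparseVec r l := by
  classical
  rw [Matrix.rank_diagonal, SparseVec, ← Nat.card_coe_set_eq, ← Nat.card_eq_fintype_card]
  simp only [ne_eq, Complex.ofReal_eq_zero, Set.coe_ofPred]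

end SparseVec

section Frobenius

variable {α β : Type*} [Fintype α] [Fintype β]

lemma frob_sq (X : Matrix α β ℂ) : frob X ^ 2 = ∑ i, ∑ j, ‖X i j‖ ^ 2 :=
  Real.sq_sqrt (by positivity)

lemma frob_sq_eq_sum_norm_col_sq (X : Matrix α β ℂ) :
    frob X ^ 2 = ∑ j, ‖WithLp.toLp 2 (X.col j)‖ ^ 2 := by
  simp only [frob_sq, EuclideanSpace.norm_sq_eq, Matrix.col_apply]
  exact Finset.sum_comm

lemma frob_diagonal_sq [DecidableEq α] (c : α → ℂ) :
    frob (Matrix.diagonal c) ^ 2 = ∑ j, ‖c j‖ ^ 2 := by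
  simp [frob_sq, Matrix.diagonal_apply, apply_ite, Finset.sum_ite_eq]

lemma exists_sparseVec_rank_frob_diagonal_sub_le [DecidableEq α] (c : α → ℝ) (ρ : Matrix α α ℂ) :
    ∃ l : α → ℝ, SparseVec ρ.rank l ∧
      frob ((Matrix.diagonal fun j ↦ (c j : ℂ)) - Matrix.diagonal fun j ↦ (l j : ℂ)) ^ 2 ≤
        frob ((Matrix.diagonal fun j ↦ (c j : ℂ)) - ρ) ^ 2 := by
  let e := EuclideanSpace.basisFun α ℂ
  let V := LinearMap.range (Matrix.toEuclideanLin ρ)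
  have hrank : ρ.rank = Module.finrank ℂ V :=
    ρ.rank_eq_finrank_range_toLin e.toBasis e.toBasis
  obtain ⟨S, hS, hle⟩ := exists_card_le_finrank_sum_compl_le e V (fun j ↦ (c j : ℂ))
    fun j ↦ LinearMap.mem_range_self (Matrix.toEuclideanLin ρ) (e j)
  refine ⟨(S : Set α).indicator c, sparseVec_indicator (hrank ▸ hS) c, ?_⟩
  calc
    frob ((Matrix.diagonal fun j ↦ (c j : ℂ)) -
          Matrix.diagonal fun j ↦ (((S : Set α).indicator c j : ℝ) : ℂ)) ^ 2
        = ∑ j ∈ Sᶜ, ‖(c j : ℂ)‖ ^ 2 := by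
      rw [Matrix.diagonal_sub, frob_diagonal_sq, ← Finset.sum_compl_add_sum S, add_eq_left.2]
      · refine Finset.sum_congr rfl fun j hj ↦ ?_
        rw [Set.indicator_of_notMem (by simpa using hj), Complex.ofReal_zero, sub_zero]
      · refine Finset.sum_eq_zero fun j hj ↦ ?_
        simp [hj]
    _ ≤ ∑ j, ‖(c j : ℂ) • e j - Matrix.toEuclideanLin ρ (e j)‖ ^ 2 := hle
    _ = frob ((Matrix.diagonal fun j ↦ (c j : ℂ)) - ρ) ^ 2 := by
      rw [frob_sq_eq_sum_norm_col_sq]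
      congr! 3 with j
      ext i
      by_cases hij : i = j <;> simp [e, hij]

end Frobenius

lemma exists_vecMul_sub_vecMulVec_eq_zero {𝕜 m n : Type*} [Field 𝕜] [LinearOrder 𝕜]
    [IsStrictOrderedRing 𝕜] [Fintype m] (ξ : m → 𝕜) (A : Matrix m n 𝕜) :
    ∃ c : n → 𝕜, ξ ᵥ* (A - Matrix.vecMulVec ξ c) = 0 := by
  rcases eq_or_ne ξ 0 with rfl | hξ
  · exact ⟨0, Matrix.zero_vecMul _⟩
  · refine ⟨(ξ ⬝ᵥ ξ)⁻¹ • (ξ ᵥ* A), ?_⟩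
    rw [Matrix.vecMul_sub, Matrix.vecMul_vecMulVec,
      smul_inv_smul₀ (dotProduct_self_eq_zero.not.2 hξ), sub_self]

section BlockMatrix

variable {n d : ℕ}

lemma diagBlocks_sub (A B : Matrix (Fin n) (Fin d) ℝ) :
    diagBlocks (A - B) = diagBlocks A - diagBlocks B := by
  ext p l
  by_cases h : p.2 = l <;> simp [diagBlocks, h]

lemma tensorBlock_sub (ξ : Fin n → ℝ) (ρ σ : Matrix (Fin d) (Fin d) ℂ) :
    tensorBlock ξ (ρ - σ) = tensorBlock ξ ρ - tensorBlock ξ σ := by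
  ext p l
  simp [tensorBlock, mul_sub]

lemma tensorBlock_diagonal (ξ : Fin n → ℝ) (l : Fin d → ℝ) :
    tensorBlock ξ (Matrix.diagonal fun j ↦ (l j : ℂ)) = diagBlocks (Matrix.vecMulVec ξ l) := by
  ext p k
  by_cases h : p.2 = k <;> simp [tensorBlock, diagBlocks, Matrix.vecMulVec_apply, h]

lemma frob_diagBlocks (A : Matrix (Fin n) (Fin d) ℝ) : frob (diagBlocks A) = frobR A := by
  simp [frob, frobR, diagBlocks, Fintype.sum_prod_type, apply_ite]

lemma frob_add_tensorBlock_sq {X : Matrix (Fin n × Fin d) (Fin d) ℂ} {ξ : Fin n → ℝ}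
    (Y : Matrix (Fin d) (Fin d) ℂ) (h : ∀ j k, ∑ i, ξ i • X (i, j) k = 0) :
    frob (X + tensorBlock ξ Y) ^ 2 = frob X ^ 2 + (ξ ⬝ᵥ ξ) * frob Y ^ 2 := by
  have hentry (j k : Fin d) : ∑ i, ‖(X + tensorBlock ξ Y) (i, j) k‖ ^ 2 =
      ∑ i, ‖X (i, j) k‖ ^ 2 + (ξ ⬝ᵥ ξ) * ‖Y j k‖ ^ 2 := by
    simpa [tensorBlock] using sum_norm_add_smul_sq (Y j k) (h j k)
  have hsum (Z : Matrix (Fin n × Fin d) (Fin d) ℂ) :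
      frob Z ^ 2 = ∑ j, ∑ k, ∑ i, ‖Z (i, j) k‖ ^ 2 := by
    rw [frob_sq, Fintype.sum_prod_type, Finset.sum_comm]
    exact Finset.sum_congr rfl fun j _ ↦ Finset.sum_comm
  simp only [hsum, hentry, frob_sq Y, Finset.sum_add_distrib, Finset.mul_sum]

lemma sum_smul_diagBlocks_eq_zero {A : Matrix (Fin n) (Fin d) ℝ} {ξ : Fin n → ℝ}
    (h : ξ ᵥ* A = 0) (j k : Fin d) : ∑ i, ξ i • diagBlocks A (i, j) k = 0 := by
  have hj : ∑ i, ξ i * A i j = 0 := congrFun h j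
  by_cases hjk : j = k
  · simpa [diagBlocks, hjk] using congrArg Complex.ofReal hj
  · simp [diagBlocks, hjk]

lemma frob_diagBlocks_sub_tensorBlock_sq {A : Matrix (Fin n) (Fin d) ℝ} {ξ : Fin n → ℝ}
    {c : Fin d → ℝ} (hc : ξ ᵥ* (A - Matrix.vecMulVec ξ c) = 0)
    (ρ : Matrix (Fin d) (Fin d) ℂ) :
    frob (diagBlocks A - tensorBlock ξ ρ) ^ 2 =
      frobR (A - Matrix.vecMulVec ξ c) ^ 2 +
        (ξ ⬝ᵥ ξ) * frob ((Matrix.diagonal fun j ↦ (c j : ℂ)) - ρ) ^ 2 := by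
  have hsplit : diagBlocks A - tensorBlock ξ ρ = diagBlocks (A - Matrix.vecMulVec ξ c) +
      tensorBlock ξ ((Matrix.diagonal fun j ↦ (c j : ℂ)) - ρ) := by
    rw [diagBlocks_sub, tensorBlock_sub, tensorBlock_diagonal, sub_add_sub_cancel]
  rw [hsplit, frob_add_tensorBlock_sq, frob_diagBlocks]
  exact sum_smul_diagBlocks_eq_zero hc

lemma frob_diagBlocks_sub_tensorBlock_diagonal (A : Matrix (Fin n) (Fin d) ℝ) (ξ : Fin n → ℝ)
    (l : Fin d → ℝ) :
    frob (diagBlocks A - tensorBlock ξ (Matrix.diagonal fun j ↦ (l j : ℂ))) =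
      frobR (A - Matrix.vecMulVec ξ l) := by
  rw [tensorBlock_diagonal, ← diagBlocks_sub, frob_diagBlocks]

lemma exists_sparseVec_rank_frobR_sub_vecMulVec_le (A : Matrix (Fin n) (Fin d) ℝ)
    (ξ : Fin n → ℝ) (ρ : Matrix (Fin d) (Fin d) ℂ) :
    ∃ l : Fin d → ℝ, SparseVec ρ.rank l ∧
      frobR (A - Matrix.vecMulVec ξ l) ^ 2 ≤ frob (diagBlocks A - tensorBlock ξ ρ) ^ 2 := by
  obtain ⟨c, hc⟩ := exists_vecMul_sub_vecMulVec_eq_zero ξ A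
  obtain ⟨l, hl, hle⟩ := exists_sparseVec_rank_frob_diagonal_sub_le c ρ
  refine ⟨l, hl, ?_⟩
  rw [← frob_diagBlocks_sub_tensorBlock_diagonal, frob_diagBlocks_sub_tensorBlock_sq hc,
    frob_diagBlocks_sub_tensorBlock_sq hc]
  have hξ : 0 ≤ ξ ⬝ᵥ ξ := Finset.sum_nonneg fun i _ ↦ mul_self_nonneg (ξ i)
  gcongr

theorem sparsePCA_reduction_identity_general (s r : ℕ) (A' : Matrix (Fin n) (Fin d) ℝ)
    {H : Matrix (Fin d) (Fin d) ℂ → Prop}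
    (hH : ∀ l : Fin d → ℝ, H (Matrix.diagonal fun j ↦ (l j : ℂ))) :
    sInf {t : ℝ | ∃ ξ : Fin n → ℝ, ∃ ρ : Matrix (Fin d) (Fin d) ℂ,
        SparseVec s ξ ∧ H ρ ∧ ρ.rank ≤ r ∧
        t = frob (diagBlocks A' - tensorBlock ξ ρ) ^ 2} =
    sInf {t : ℝ | ∃ ξ : Fin n → ℝ, ∃ lam : Fin d → ℝ,
        SparseVec s ξ ∧ SparseVec r lam ∧
        t = frobR (A' - Matrix.vecMulVec ξ lam) ^ 2} := by
  apply csInf_eq_csInf_of_forall_exists_le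
  · rintro _ ⟨ξ, ρ, hξ, -, hρ, rfl⟩
    obtain ⟨l, hl, hle⟩ := exists_sparseVec_rank_frobR_sub_vecMulVec_le A' ξ ρ
    exact ⟨_, ⟨ξ, l, hξ, hl.trans hρ, rfl⟩, hle⟩
  · rintro _ ⟨ξ, l, hξ, hl, rfl⟩
    refine ⟨_, ⟨ξ, Matrix.diagonal fun j ↦ (l j : ℂ), hξ, hH l,
      rank_diagonal_ofReal_le_iff_sparseVec.2 hl, rfl⟩, ?_⟩
    rw [frob_diagBlocks_sub_tensorBlock_diagonal]

end BlockMatrix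

/-- **Key identity in the reduction of sparsePCA to the projection onto the
blind-tomography signal set.**
For `A' ∈ ℝ^{n×d}` with rows `A'₁, …, A'ₙ` and
`A = ∑ᵢ eᵢ ⊗ diag(A'ᵢ) ∈ ℂ^{nd×d}`, the minimum over `s`-sparse `ξ ∈ ℝⁿ` and
Hermitian `ρ ∈ ℂ^{d×d}` of rank at most `r` of `‖A − ξ ⊗ ρ‖_F²` equals the
minimum over `s`-sparse `ξ ∈ ℝⁿ` and `r`-sparse `λ ∈ ℝ^d` of
`‖A' − ξ λᵀ‖_F²`. -/
theorem sparsePCA_reduction_identity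
    (n d s r : ℕ) (A' : Matrix (Fin n) (Fin d) ℝ) :
    sInf {t : ℝ | ∃ ξ : Fin n → ℝ, ∃ ρ : Matrix (Fin d) (Fin d) ℂ,
        SparseVec s ξ ∧ ρ.IsHermitian ∧ ρ.rank ≤ r ∧
        t = frob (diagBlocks A' - tensorBlock ξ ρ) ^ 2} =
    sInf {t : ℝ | ∃ ξ : Fin n → ℝ, ∃ lam : Fin d → ℝ,
        SparseVec s ξ ∧ SparseVec r lam ∧
        t = frobR (A' - Matrix.vecMulVec ξ lam) ^ 2} :=
  sparsePCA_reduction_identity_general s r A' fun l ↦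
    Matrix.isHermitian_diagonal_of_self_adjoint _ (funext fun j ↦ Complex.conj_ofReal (l j))
end
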